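/- arXiv:1801.00673 — 2 statements merged into one kernel-verified Lean document; each statement's English description precedes it below -/
import Mathlib

section
/- Corollary of the sparse Gram estimate (core of Lemma 3.1, the interpolation error estimate): Let E be a real inner product space, s a finite index set, (v_i)_{i∈s} vectors in E and (c_i)_{i∈s} real coefficients. Suppose there is K ∈ ℕ such that for every i ∈ s the number of indices j ∈ s with ⟨v_i, v_j⟩ ≠ 0 is at most K, that |c_i| ≤ M for all i ∈ s, and that Σ_{i∈s} ‖v_i‖² ≤ tol². Then ‖Σ_{i∈s} c_i v_i‖² ≤ K · M² · tol². -/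
open RealInnerProductSpace

/-!
After expanding the square and applying Cauchy–Schwarz, only the products `‖w i‖ * ‖w j‖` over
non-orthogonal pairs remain. Splitting each by AM–GM and using that non-orthogonality is symmetric,
every `‖w i‖ ^ 2` is counted at most `K` times. Scaling the vectors creates no new non-orthogonal
pair, so the bound applies to `w i = c i • v i`.
-/

section SparseGram

variable {ι : Type*}

theorem sum_sum_filter_mul_le_mul_sum_sq_of_card_le {R : Type*} [CommRing R] [LinearOrder R]
    [IsStrictOrderedRing R] {r : ι → ι → Prop} [DecidableRel r] [Std.Symm r]
    {s : Finset ι} {K : ℕ} (hK : ∀ i ∈ s, (s.filter (r i)).card ≤ K) (a : ι → R) :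
    ∑ i ∈ s, ∑ j ∈ s with r i j, a i * a j ≤ K * ∑ i ∈ s, a i ^ 2 := by
  have row_le : ∑ i ∈ s, ∑ j ∈ s with r i j, a i ^ 2 ≤ K * ∑ i ∈ s, a i ^ 2 := by
    simp_rw [Finset.sum_const, nsmul_eq_mul, Finset.mul_sum]
    gcongr with i hi
    exact hK i hi
  have col_eq_row :
      ∑ i ∈ s, ∑ j ∈ s with r i j, a j ^ 2 = ∑ i ∈ s, ∑ j ∈ s with r i j, a i ^ 2 :=
    Finset.sum_comm' fun i j => by
      simp only [Finset.mem_filter, Std.Symm.iff (r := r) i j]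
      tauto
  refine le_of_mul_le_mul_left ?_ (zero_lt_two' R)
  calc 2 * ∑ i ∈ s, ∑ j ∈ s with r i j, a i * a j
      = ∑ i ∈ s, ∑ j ∈ s with r i j, 2 * a i * a j := by simp_rw [Finset.mul_sum, mul_assoc]
    _ ≤ ∑ i ∈ s, ∑ j ∈ s with r i j, (a i ^ 2 + a j ^ 2) := by
        gcongr with i _ j _
        exact two_mul_le_add_sq (a i) (a j)
    _ = 2 * ∑ i ∈ s, ∑ j ∈ s with r i j, a i ^ 2 := by
        simp_rw [Finset.sum_add_distrib, col_eq_row, two_mul]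
    _ ≤ 2 * (K * ∑ i ∈ s, a i ^ 2) := by gcongr

variable {𝕜 E : Type*} [RCLike 𝕜] [SeminormedAddCommGroup E] [InnerProductSpace 𝕜 E]

variable (𝕜) in
theorem norm_sum_sq_le_sum_sum_filter_inner_ne_zero [DecidableEq 𝕜] (s : Finset ι) (w : ι → E) :
    ‖∑ i ∈ s, w i‖ ^ 2 ≤
      ∑ i ∈ s, ∑ j ∈ s with inner 𝕜 (w i) (w j) ≠ 0, ‖w i‖ * ‖w j‖ := by
  calc ‖∑ i ∈ s, w i‖ ^ 2
      = ∑ i ∈ s, ∑ j ∈ s, RCLike.re (inner 𝕜 (w i) (w j)) := by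
        simp_rw [← inner_self_eq_norm_sq (𝕜 := 𝕜), sum_inner, inner_sum, map_sum]
    _ = ∑ i ∈ s, ∑ j ∈ s with inner 𝕜 (w i) (w j) ≠ 0, RCLike.re (inner 𝕜 (w i) (w j)) := by
        refine Finset.sum_congr rfl fun i _ => (Finset.sum_filter_of_ne fun j _ => ?_).symm
        exact mt fun h => by rw [h, map_zero]
    _ ≤ ∑ i ∈ s, ∑ j ∈ s with inner 𝕜 (w i) (w j) ≠ 0, ‖w i‖ * ‖w j‖ := by
        gcongr with i _ j _
        exact re_inner_le_norm (w i) (w j)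

theorem norm_sum_sq_le_mul_sum_norm_sq_of_card_le [DecidableEq 𝕜] {s : Finset ι} {w : ι → E} {K : ℕ}
    (hK : ∀ i ∈ s, (s.filter fun j => inner 𝕜 (w i) (w j) ≠ 0).card ≤ K) :
    ‖∑ i ∈ s, w i‖ ^ 2 ≤ K * ∑ i ∈ s, ‖w i‖ ^ 2 := by
  have : Std.Symm fun i j => inner 𝕜 (w i) (w j) ≠ 0 := ⟨fun _ _ => mt inner_eq_zero_symm.mp⟩
  exact (norm_sum_sq_le_sum_sum_filter_inner_ne_zero 𝕜 s w).trans <|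
    sum_sum_filter_mul_le_mul_sum_sq_of_card_le hK fun i => ‖w i‖

theorem filter_inner_smul_ne_zero_subset [DecidableEq 𝕜] (s : Finset ι) (v : ι → E)
    (c : ι → 𝕜) (i : ι) :
    (s.filter fun j => inner 𝕜 (c i • v i) (c j • v j) ≠ 0) ⊆
      s.filter fun j => inner 𝕜 (v i) (v j) ≠ 0 :=
  Finset.monotone_filter_right s fun j _ => mt fun h => by
    rw [inner_smul_left, inner_smul_right, h, mul_zero, mul_zero]

theorem sparse_gram_corollary_general [DecidableEq 𝕜] (s : Finset ι) (v : ι → E) (c : ι → 𝕜)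
    (K : ℕ) (M tol : ℝ)
    (hK : ∀ i ∈ s, (s.filter fun j => inner 𝕜 (v i) (v j) ≠ 0).card ≤ K)
    (hc : ∀ i ∈ s, ‖c i‖ ≤ M)
    (hsum : ∑ i ∈ s, ‖v i‖ ^ 2 ≤ tol ^ 2) :
    ‖∑ i ∈ s, c i • v i‖ ^ 2 ≤ K * M ^ 2 * tol ^ 2 := by
  have hK_smul : ∀ i ∈ s,
      (s.filter fun j => inner 𝕜 (c i • v i) (c j • v j) ≠ 0).card ≤ K := fun i hi =>
    (Finset.card_le_card (filter_inner_smul_ne_zero_subset s v c i)).trans (hK i hi)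
  calc ‖∑ i ∈ s, c i • v i‖ ^ 2
      ≤ K * ∑ i ∈ s, ‖c i • v i‖ ^ 2 := norm_sum_sq_le_mul_sum_norm_sq_of_card_le hK_smul
    _ ≤ K * ∑ i ∈ s, M ^ 2 * ‖v i‖ ^ 2 := by
        simp_rw [norm_smul, mul_pow]
        gcongr with i hi
        exact hc i hi
    _ = K * M ^ 2 * ∑ i ∈ s, ‖v i‖ ^ 2 := by rw [← Finset.mul_sum, mul_assoc]
    _ ≤ K * M ^ 2 * tol ^ 2 := by gcongr

end SparseGram

/-- Corollary of the sparse Gram estimate (core of the interpolation error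
estimate): if each vector `v i` is non-orthogonal to at most `K` of the
vectors `v j`, the coefficients satisfy `|c i| ≤ M`, and
`∑ ‖v i‖² ≤ tol²`, then `‖∑ c i • v i‖² ≤ K · M² · tol²`. -/
theorem sparse_gram_corollary
    {E : Type*} [NormedAddCommGroup E] [InnerProductSpace ℝ E]
    {ι : Type*} [DecidableEq ι] (s : Finset ι) (v : ι → E) (c : ι → ℝ)
    (K : ℕ) (M tol : ℝ) (hM : 0 ≤ M) (htol : 0 ≤ tol)
    (hK : ∀ i ∈ s, (s.filter fun j => ⟪v i, v j⟫ ≠ (0 : ℝ)).card ≤ K)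
    (hc : ∀ i ∈ s, |c i| ≤ M)
    (hsum : ∑ i ∈ s, ‖v i‖ ^ 2 ≤ tol ^ 2) :
    ‖∑ i ∈ s, c i • v i‖ ^ 2 ≤ (K : ℝ) * M ^ 2 * tol ^ 2 :=
  sparse_gram_corollary_general s v c K M tol hK hc hsum
end

section
/- Regularity of uniform B-splines: Let h > 0, x_i = i·h for i ∈ ℤ, and let φ : ℤ → ℕ → ℝ → ℝ satisfy the Cox–de Boor recursion φ_{i,p}(x) = ((x − x_i)/(p h)) φ_{i,p−1}(x) + ((x_{i+p+1} − x)/(p h)) φ_{i+1,p−1}(x) for p ≥ 1, with φ_{i,0} the indicator function of [x_i, x_{i+1}). Then for every p ≥ 1 and every i ∈ ℤ, the function φ_{i,p} : ℝ → ℝ is of class C^{p−1} on all of ℝ. -/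
/-!
Indicators of half-open intervals `[a, b)` are right-differentiable everywhere with derivative `0`,
so the Cox–de Boor recursion propagates to *right* derivatives at every point, knots included:
`B'_{p+1,i} = (p + 1) (B_{p,i} / (t_{i+p+1} - t_i) - B_{p,i+1} / (t_{i+p+2} - t_{i+1}))`.
Since order one splines are continuous hat functions, all higher orders are continuous too, and a
continuous function with a continuous right derivative is differentiable. The formula then holds
for two-sided derivatives from order two on, so each order gains one degree of regularity.
-/

open Set Filter Topology

theorem eventually_nhdsGE_le_iff {α : Type*} [TopologicalSpace α] [LinearOrder α]
    [ClosedIciTopology α] (a x : α) : ∀ᶠ y in 𝓝[≥] x, (a ≤ y ↔ a ≤ x) := by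
  rcases le_or_gt a x with hax | hxa
  · filter_upwards [self_mem_nhdsWithin] with y hy
    exact iff_of_true (hax.trans hy) hax
  · filter_upwards [mem_nhdsWithin_of_mem_nhds (Iio_mem_nhds hxa)] with y hy
    exact iff_of_false hy.not_ge hxa.not_ge

theorem eventually_nhdsGE_mem_Ico_iff {α : Type*} [TopologicalSpace α] [LinearOrder α]
    [ClosedIciTopology α] (a b x : α) : ∀ᶠ y in 𝓝[≥] x, (y ∈ Ico a b ↔ x ∈ Ico a b) := by
  filter_upwards [eventually_nhdsGE_le_iff a x, eventually_nhdsGE_le_iff b x] with y hay hby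
  rw [mem_Ico, mem_Ico, hay, lt_iff_lt_of_le_iff_le hby]

section NormedSpace

variable {E : Type*} [NormedAddCommGroup E] [NormedSpace ℝ E]

theorem hasDerivWithinAt_Ici_indicator_Ico_const (a b x : ℝ) (c : E) :
    HasDerivWithinAt ((Ico a b).indicator fun _ => c) 0 (Ici x) x := by
  refine (hasDerivWithinAt_const x (Ici x) _).congr_of_eventuallyEq ?_ rfl
  filter_upwards [eventually_nhdsGE_mem_Ico_iff a b x] with y hy
  simp only [indicator_apply, hy]

theorem hasDerivAt_of_hasDerivWithinAt_Ici [CompleteSpace E] {f f' : ℝ → E}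
    (hf : Continuous f) (hf' : Continuous f')
    (hderiv : ∀ x, HasDerivWithinAt f (f' x) (Ici x) x) (x : ℝ) : HasDerivAt f (f' x) x := by
  have f_eq_integral : f = fun y => f x + ∫ s in x..y, f' s := by
    funext y
    rw [intervalIntegral.integral_eq_sub_of_hasDeriv_right hf.continuousOn
      (fun s _ => (hderiv s).Ioi_of_Ici) (hf'.intervalIntegrable x y), add_sub_cancel]
  rw [f_eq_integral]
  exact (hf'.integral_hasStrictDerivAt x x).hasDerivAt.const_add (f x)

end NormedSpace

theorem hat_eq_max_min {a b c : ℝ} (hab : a < b) (hbc : b < c) (x : ℝ) :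
    (x - a) / (b - a) * (Ico a b).indicator 1 x + (c - x) / (c - b) * (Ico b c).indicator 1 x =
      max 0 (min ((x - a) / (b - a)) ((c - x) / (c - b))) := by
  have hba : 0 < b - a := sub_pos.2 hab
  have hcb : 0 < c - b := sub_pos.2 hbc
  simp only [indicator_apply, mem_Ico, Pi.one_apply, mul_ite, mul_one, mul_zero]
  rcases lt_or_ge x b with hxb | hbx
  · have rising_le_falling : (x - a) / (b - a) ≤ (c - x) / (c - b) :=
      ((div_le_one hba).2 (by linarith)).trans ((one_le_div hcb).2 (by linarith))
    have not_mem_right : ¬(b ≤ x ∧ x < c) := fun hx => hx.1.not_gt hxb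
    rw [min_eq_left rising_le_falling, if_neg not_mem_right, add_zero]
    rcases lt_or_ge x a with hxa | hax
    · rw [if_neg (fun hx => hx.1.not_gt hxa),
        max_eq_left (div_nonpos_of_nonpos_of_nonneg (by linarith) hba.le)]
    · rw [if_pos ⟨hax, hxb⟩, max_eq_right (div_nonneg (by linarith) hba.le)]
  · have falling_le_rising : (c - x) / (c - b) ≤ (x - a) / (b - a) :=
      ((div_le_one hcb).2 (by linarith)).trans ((one_le_div hba).2 (by linarith))
    have not_mem_left : ¬(a ≤ x ∧ x < b) := fun hx => hx.2.not_ge hbx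
    rw [min_eq_right falling_le_rising, if_neg not_mem_left, zero_add]
    rcases lt_or_ge x c with hxc | hcx
    · rw [if_pos ⟨hbx, hxc⟩, max_eq_right (div_nonneg (by linarith) hcb.le)]
    · rw [if_neg (fun hx => hx.2.not_ge hcx),
        max_eq_left (div_nonpos_of_nonpos_of_nonneg (by linarith) hcb.le)]

/-- The B-spline basis function of order `p` on the knots `t i, …, t (i + p + 1)` of a bi-infinite
sequence `t`, given by the Cox–de Boor recursion; `bspline t p i` is `φ_{i,p}` in the usual
notation. A quotient whose end knots coincide is `0`, the customary convention for repeated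
knots. -/
noncomputable def bspline (t : ℤ → ℝ) : ℕ → ℤ → ℝ → ℝ
  | 0, i => (Ico (t i) (t (i + 1))).indicator 1
  | p + 1, i => fun x =>
      (x - t i) / (t (i + p + 1) - t i) * bspline t p i x +
        (t (i + p + 2) - x) / (t (i + p + 2) - t (i + 1)) * bspline t p (i + 1) x

section bspline

variable {t : ℤ → ℝ}

theorem hasDerivWithinAt_bspline_succ {p : ℕ} {i : ℤ} {s : Set ℝ} {x a b : ℝ}
    (ha : HasDerivWithinAt (bspline t p i) a s x)
    (hb : HasDerivWithinAt (bspline t p (i + 1)) b s x) :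
    HasDerivWithinAt (bspline t (p + 1) i)
      (1 / (t (i + p + 1) - t i) * bspline t p i x + (x - t i) / (t (i + p + 1) - t i) * a +
        (-1 / (t (i + p + 2) - t (i + 1)) * bspline t p (i + 1) x +
          (t (i + p + 2) - x) / (t (i + p + 2) - t (i + 1)) * b)) s x :=
  ((((hasDerivWithinAt_id x s).sub_const (t i)).div_const _).mul ha).add
    ((((hasDerivWithinAt_id x s).const_sub (t (i + p + 2))).div_const _).mul hb)

theorem hasDerivWithinAt_Ici_bspline (ht : Function.Injective t) (p : ℕ) (i : ℤ) (x : ℝ) :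
    HasDerivWithinAt (bspline t (p + 1) i)
      ((p + 1) * (bspline t p i x / (t (i + p + 1) - t i) -
        bspline t p (i + 1) x / (t (i + p + 2) - t (i + 1)))) (Ici x) x := by
  induction p generalizing i with
  | zero =>
    have right_deriv_zero (j : ℤ) : HasDerivWithinAt (bspline t 0 j) 0 (Ici x) x :=
      hasDerivWithinAt_Ici_indicator_Ico_const (t j) (t (j + 1)) x 1
    convert! hasDerivWithinAt_bspline_succ (right_deriv_zero i) (right_deriv_zero (i + 1)) using 1
    push_cast
    ring
  | succ p ih =>
    convert! hasDerivWithinAt_bspline_succ (ih i) (ih (i + 1)) using 1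
    have left_ratio : (t (i + p + 2) - t i) / (t (i + p + 2) - t i) = 1 :=
      div_self (sub_ne_zero.2 (ht.ne (by lia)))
    have right_ratio : (t (i + p + 3) - t (i + 1)) / (t (i + p + 3) - t (i + 1)) = 1 :=
      div_self (sub_ne_zero.2 (ht.ne (by lia)))
    have left_index : i + (p + 1 : ℕ) + 1 = i + p + 2 := by lia
    have right_index : i + (p + 1 : ℕ) + 2 = i + p + 3 := by lia
    have shifted_left_index : i + 1 + p + 1 = i + p + 2 := by lia
    have shifted_right_index : i + 1 + p + 2 = i + p + 3 := by lia
    simp only [bspline, left_index, right_index, shifted_left_index, shifted_right_index]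
    push_cast
    -- Both recursion branches contribute to the coefficient of `bspline t p (i + 1) x`, and their
    -- sum is off from the claimed one by `left_ratio - right_ratio`, that is, by `1 - 1`.
    linear_combination (p + 1) * (bspline t p (i + 1) x / (t (i + p + 2) - t (i + 1))) *
      (left_ratio - right_ratio)

theorem continuous_bspline_succ (ht : StrictMono t) (p : ℕ) (i : ℤ) :
    Continuous (bspline t (p + 1) i) := by
  induction p generalizing i with
  | zero =>
    have hat : bspline t 1 i = fun x =>
        max 0 (min ((x - t i) / (t (i + 1) - t i))
          ((t (i + 2) - x) / (t (i + 2) - t (i + 1)))) := by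
      funext x
      rw [← hat_eq_max_min (ht (by lia)) (ht (by lia))]
      simp [bspline, add_assoc]
    rw [hat]
    fun_prop
  | succ p ih =>
    have continuous_order_succ (j : ℤ) : Continuous (bspline t (p + 1) j) := ih j
    rw [bspline]
    fun_prop

theorem hasDerivAt_bspline (ht : StrictMono t) (p : ℕ) (i : ℤ) (x : ℝ) :
    HasDerivAt (bspline t (p + 2) i)
      ((p + 2) * (bspline t (p + 1) i x / (t (i + p + 2) - t i) -
        bspline t (p + 1) (i + 1) x / (t (i + p + 3) - t (i + 1)))) x := by
  have continuous_order_succ (j : ℤ) : Continuous (bspline t (p + 1) j) :=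
    continuous_bspline_succ ht p j
  have right_deriv (y : ℝ) : HasDerivWithinAt (bspline t (p + 2) i)
      ((p + 2) * (bspline t (p + 1) i y / (t (i + p + 2) - t i) -
        bspline t (p + 1) (i + 1) y / (t (i + p + 3) - t (i + 1)))) (Ici y) y := by
    have left_index : i + (p + 1 : ℕ) + 1 = i + p + 2 := by lia
    have right_index : i + (p + 1 : ℕ) + 2 = i + p + 3 := by lia
    have order_cast : ((p + 1 : ℕ) : ℝ) + 1 = p + 2 := by push_cast; ring
    simpa only [left_index, right_index, order_cast] using
      hasDerivWithinAt_Ici_bspline ht.injective (p + 1) i y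
  exact hasDerivAt_of_hasDerivWithinAt_Ici (continuous_bspline_succ ht (p + 1) i)
    (by fun_prop) right_deriv x

theorem bspline_regularity_general (ht : StrictMono t) (p : ℕ) (i : ℤ) :
    ContDiff ℝ p (bspline t (p + 1) i) := by
  induction p generalizing i with
  | zero => exact contDiff_zero.2 (continuous_bspline_succ ht 0 i)
  | succ p ih =>
    have deriv_eq : deriv (bspline t (p + 2) i) = fun x =>
        (p + 2) * (bspline t (p + 1) i x / (t (i + p + 2) - t i) -
          bspline t (p + 1) (i + 1) x / (t (i + p + 3) - t (i + 1))) :=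
      funext fun x => (hasDerivAt_bspline ht p i x).deriv
    rw [Nat.cast_succ, contDiff_succ_iff_deriv, deriv_eq]
    refine ⟨fun x => (hasDerivAt_bspline ht p i x).differentiableAt, by simp, ?_⟩
    exact contDiff_const.mul (((ih i).div_const _).sub ((ih (i + 1)).div_const _))

end bspline

theorem eq_bspline_of_uniform_recursion {h : ℝ} {φ : ℤ → ℕ → ℝ → ℝ}
    (hbase : ∀ (i : ℤ) (x : ℝ),
      φ i 0 x = if x ∈ Ico ((i : ℝ) * h) (((i : ℝ) + 1) * h) then 1 else 0)
    (hrec : ∀ (i : ℤ) (p : ℕ) (x : ℝ),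
      φ i (p + 1) x =
        ((x - (i : ℝ) * h) / (((p : ℝ) + 1) * h)) * φ i p x
        + ((((i : ℝ) + (p : ℝ) + 2) * h - x) / (((p : ℝ) + 1) * h)) * φ (i + 1) p x)
    (p : ℕ) (i : ℤ) : φ i p = bspline (fun j => j * h) p i := by
  induction p generalizing i with
  | zero =>
    funext x
    simp [hbase, bspline, indicator_apply]
  | succ p ih =>
    funext x
    have left_knots : ((i + p + 1 : ℤ) : ℝ) * h - i * h = (p + 1) * h := by push_cast; ring
    have right_knots : ((i + p + 2 : ℤ) : ℝ) * h - (i + 1 : ℤ) * h = (p + 1) * h := by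
      push_cast; ring
    rw [hrec, ih, ih, bspline, left_knots, right_knots]
    push_cast
    rfl

/-- Regularity of uniform B-splines: the B-spline `φ i p` of order `p ≥ 1`
defined by the Cox–de Boor recursion on the uniform knots `xᵢ = i h` is of
class `C^{p−1}` on all of `ℝ`. -/
theorem bspline_regularity
    (h : ℝ) (hh : 0 < h) (φ : ℤ → ℕ → ℝ → ℝ)
    (hbase : ∀ (i : ℤ) (x : ℝ),
      φ i 0 x = if x ∈ Set.Ico ((i : ℝ) * h) (((i : ℝ) + 1) * h) then 1 else 0)
    (hrec : ∀ (i : ℤ) (p : ℕ) (x : ℝ),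
      φ i (p + 1) x =
        ((x - (i : ℝ) * h) / (((p : ℝ) + 1) * h)) * φ i p x
        + ((((i : ℝ) + (p : ℝ) + 2) * h - x) / (((p : ℝ) + 1) * h)) * φ (i + 1) p x) :
    ∀ p : ℕ, 1 ≤ p → ∀ i : ℤ, ContDiff ℝ ((p - 1 : ℕ) : ℕ∞) (φ i p) := by
  rintro (_ | p) hp i
  · contradiction
  rw [eq_bspline_of_uniform_recursion hbase hrec]
  exact bspline_regularity_general (Int.cast_strictMono.mul_const hh) p i
end
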